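/- For a word w = a₁⋯a_n in E_r with w̄ = Σ_{J ∈ C(n)} J[w], one has the inversion formula w = Σ_{w₁⋯w_k = R(w)} (−1)^{n−k} w̄₁ * ⋯ * w̄_k, sum over decompositions of the reversed word R(w) into nonempty consecutive subwords. -/

import Mathlib

open Finsupp Finset

/-- A letter `z_{i,j}`: first subscript a natural number (positive in intended use),
second subscript in `ℤ/r`. -/
abbrev QLetter (r : ℕ) := ℕ × ZMod r

/-- The Euler algebra `E_r` as a vector space: formal `ℂ`-linear combinations of words. -/
abbrev EulerAlg (r : ℕ) := List (QLetter r) →₀ ℂ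

/-- `[a,b]`: add first subscripts, add second subscripts mod `r`. -/
def ladd {r : ℕ} (a b : QLetter r) : QLetter r := (a.1 + b.1, a.2 + b.2)

/-- Quasi-shuffle product of two words, inductively. -/
noncomputable def qmulW {r : ℕ} : List (QLetter r) → List (QLetter r) → EulerAlg r
  | [], w => Finsupp.single w 1
  | a :: w, [] => Finsupp.single (a :: w) 1
  | a :: w, b :: v =>
      (qmulW w (b :: v)).mapDomain (a :: ·) +
      (qmulW (a :: w) v).mapDomain (b :: ·) +
      (qmulW w v).mapDomain (ladd a b :: ·)
  termination_by w v => w.length + v.length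

/-- Bilinear extension of the quasi-shuffle product to `E_r`. -/
noncomputable def qmul {r : ℕ} (x y : EulerAlg r) : EulerAlg r :=
  x.sum fun w c => y.sum fun v d => (c * d) • qmulW w v
/-- `J[w]`: contraction of a word along a composition of its length. -/
def contract {r n : ℕ} (J : Composition n) (w : List (QLetter r)) : List (QLetter r) :=
  (w.splitWrtComposition J).map fun b => ((b.map Prod.fst).sum, (b.map Prod.snd).sum)

/-- `w̄ = ∑_{J ∈ C(n)} J[w]` as an element of `E_r`. -/
noncomputable def barW {r : ℕ} (w : List (QLetter r)) : EulerAlg r :=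
  ∑ J : Composition w.length, Finsupp.single (contract J w) (1 : ℂ)

/-- Quasi-shuffle product of a list of elements of `E_r`. -/
noncomputable def qprodE {r : ℕ} : List (EulerAlg r) → EulerAlg r
  | [] => Finsupp.single [] 1
  | x :: t => qmul x (qprodE t)

section Splits
variable {α M : Type*}

/-- Sum over all splittings `u = s ++ t`. -/
def spl [AddCommMonoid M] : List α → (List α → List α → M) → M
  | [], f => f [] []
  | a :: u, f => f [] (a :: u) + spl u (fun s t => f (a :: s) t)

/-- Sum over all splittings `u = s ++ t` with `s` nonempty. -/
def splP [AddCommMonoid M] : List α → (List α → List α → M) → M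
  | [], _ => 0
  | a :: u, f => spl u (fun s t => f (a :: s) t)

theorem spl_eq [AddCommMonoid M] (u : List α) (f : List α → List α → M) :
    spl u f = f [] u + splP u f := by
  cases u <;> simp [spl, splP]

theorem spl_add [AddCommMonoid M] (u : List α) (f g : List α → List α → M) :
    spl u (fun s t => f s t + g s t) = spl u f + spl u g := by
  induction u generalizing f g with
  | nil => simp [spl]
  | cons a u ih => simp only [spl, ih]; abel

theorem splP_add [AddCommMonoid M] (u : List α) (f g : List α → List α → M) :
    splP u (fun s t => f s t + g s t) = splP u f + splP u g := by
  cases u with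
  | nil => simp [splP]
  | cons a u => simp only [splP, spl_add]

theorem spl_map {N : Type*} [AddCommMonoid M] [AddCommMonoid N] (φ : M →+ N) (u : List α)
    (f : List α → List α → M) : φ (spl u f) = spl u (fun s t => φ (f s t)) := by
  induction u generalizing f with
  | nil => simp [spl]
  | cons a u ih => simp only [spl, ih, map_add]

theorem splP_map {N : Type*} [AddCommMonoid M] [AddCommMonoid N] (φ : M →+ N) (u : List α)
    (f : List α → List α → M) : φ (splP u f) = splP u (fun s t => φ (f s t)) := by
  cases u with
  | nil => simp [splP]
  | cons a u => simp only [splP, spl_map]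

theorem spl_congr [AddCommMonoid M] (u : List α) (f g : List α → List α → M)
    (h : ∀ s t, s ++ t = u → f s t = g s t) : spl u f = spl u g := by
  induction u generalizing f g with
  | nil => simp [spl, h]
  | cons a u ih =>
    simp only [spl]
    rw [h [] (a :: u) rfl, ih _ (fun s t => g (a :: s) t)]
    intro s t hst
    exact h _ _ (by simp [hst])

theorem splP_congr [AddCommMonoid M] (u : List α) (f g : List α → List α → M)
    (h : ∀ s t, s ≠ [] → s ++ t = u → f s t = g s t) : splP u f = splP u g := by
  cases u with
  | nil => rfl
  | cons a u =>
    exact spl_congr _ _ _ fun s t hst => h _ _ (by simp) (by simp [hst])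

theorem spl_snoc [AddCommMonoid M] (u : List α) (c : α) (f : List α → List α → M) :
    spl (u ++ [c]) f = spl u (fun s t => f s (t ++ [c])) + f (u ++ [c]) [] := by
  induction u generalizing f with
  | nil => simp [spl]
  | cons a u ih => simp only [List.cons_append, spl, ih, add_assoc]

theorem spl_last [AddCommMonoid M] (u : List α) (f : List α → List α → M)
    (h : ∀ s t, t ≠ [] → s ++ t = u → f s t = 0) : spl u f = f u [] := by
  induction u generalizing f with
  | nil => rfl
  | cons a u ih =>
    simp only [spl]
    rw [h [] (a :: u) (by simp) rfl, zero_add, ih]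
    intro s t ht hst
    exact h _ _ ht (by simp [hst])

theorem splP_last [AddCommMonoid M] (u : List α) (hu : u ≠ []) (f : List α → List α → M)
    (h : ∀ s t, s ≠ [] → t ≠ [] → s ++ t = u → f s t = 0) : splP u f = f u [] := by
  cases u with
  | nil => exact absurd rfl hu
  | cons a u =>
    exact spl_last u (fun s t => f (a :: s) t)
      fun s t ht hst => h _ _ (by simp) ht (by simp [hst])

theorem spl_assoc [AddCommMonoid M] (u : List α) (g : List α → List α → List α → M) :
    spl u (fun p q => spl p (fun s t => g s t q)) =
      spl u (fun s r => spl r (fun t q => g s t q)) := by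
  induction u generalizing g with
  | nil => rfl
  | cons a u ih => simp only [spl, spl_add, ih, add_assoc]

theorem splP_assoc [AddCommMonoid M] (u : List α) (g : List α → List α → List α → M) :
    spl u (fun p q => splP p (fun s t => g s t q)) =
      splP u (fun s r => spl r (fun t q => g s t q)) := by
  cases u with
  | nil => rfl
  | cons a u => simp only [spl, splP, spl_assoc, zero_add]

theorem spl_range [AddCommMonoid M] (u : List α) (f : List α → List α → M) :
    spl u f = ∑ i ∈ range (u.length + 1), f (u.take i) (u.drop i) := by
  induction u generalizing f with
  | nil => simp [spl]
  | cons a u ih =>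
    rw [List.length_cons, Finset.sum_range_succ', spl, ih, add_comm]
    simp

theorem splP_range [AddCommMonoid M] (u : List α) (f : List α → List α → M) :
    splP u f = ∑ i ∈ range u.length, f (u.take (i + 1)) (u.drop (i + 1)) := by
  cases u with
  | nil => simp [splP]
  | cons a u => simp [splP, spl_range]

open Classical in
/-- All decompositions into nonempty blocks. -/
noncomputable def decs (w : List α) : Finset (List (List α)) :=
  (univ : Finset (Composition w.length)).image (fun J => w.splitWrtComposition J)

theorem mem_decs (w : List α) (L : List (List α)) :
    L ∈ decs w ↔ L.flatten = w ∧ ∀ l ∈ L, l ≠ [] := by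
  classical
  simp only [decs, Finset.mem_image, Finset.mem_univ, true_and]
  constructor
  · rintro ⟨J, rfl⟩
    refine ⟨List.flatten_splitWrtComposition w J, ?_⟩
    intro l hl
    exact List.ne_nil_of_length_pos (List.length_pos_of_mem_splitWrtComposition hl)
  · rintro ⟨rfl, h⟩
    refine ⟨⟨L.map List.length, ?_, ?_⟩, ?_⟩
    · intro i hi
      obtain ⟨l, hl, rfl⟩ := List.mem_map.1 hi
      exact List.length_pos_of_ne_nil (h l hl)
    · rw [List.length_flatten]
    · exact List.splitWrtComposition_flatten _ _ rfl

/-- Sum over all decompositions into nonempty blocks. -/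
noncomputable def dsum [AddCommMonoid M] (w : List α) (f : List (List α) → M) : M :=
  ∑ L ∈ decs w, f L

theorem dsum_eq [AddCommMonoid M] (w : List α) (f : List (List α) → M) :
    ∑ J : Composition w.length, f (w.splitWrtComposition J) = dsum w f := by
  classical
  unfold dsum decs
  rw [Finset.sum_image]
  intro J _ K _ h
  have h' := congrArg (List.map List.length) h
  simp only [List.map_length_splitWrtComposition] at h'
  exact Composition.ext h'

theorem dsum_nil [AddCommMonoid M] (f : List (List α) → M) : dsum [] f = f [] := by
  have : decs ([] : List α) = {[]} := by
    ext L
    rw [mem_decs, Finset.mem_singleton]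
    constructor
    · rintro ⟨h1, h2⟩
      cases L with
      | nil => rfl
      | cons l L => simp_all
    · rintro rfl; simp
  rw [dsum, this, Finset.sum_singleton]

theorem dsum_rec [AddCommMonoid M] (w : List α) (hw : w ≠ []) (f : List (List α) → M) :
    dsum w f = splP w (fun s t => dsum t (fun L => f (s :: L))) := by
  rw [splP_range]
  unfold dsum
  rw [Finset.sum_sigma']
  symm
  refine Finset.sum_bij (fun x _ => w.take (x.1 + 1) :: x.2) ?_ ?_ ?_ ?_
  · rintro ⟨i, L⟩ h
    simp only [Finset.mem_sigma, Finset.mem_range, mem_decs] at h ⊢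
    obtain ⟨hi, h1, h2⟩ := h
    refine ⟨by simp [h1], ?_⟩
    intro l hl
    rcases List.mem_cons.1 hl with rfl | hl
    · simp [hw]
    · exact h2 l hl
  · rintro ⟨i, L⟩ h ⟨j, K⟩ h' e
    simp only [Finset.mem_sigma, Finset.mem_range] at h h'
    simp only [List.cons.injEq] at e
    have e1 := congrArg List.length e.1
    simp only [List.length_take] at e1
    have : i = j := by omega
    subst this
    rw [e.2]
  · intro K hK
    rw [mem_decs] at hK
    obtain ⟨h1, h2⟩ := hK
    cases K with
    | nil => exact absurd h1.symm hw
    | cons l L =>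
      have hl : 0 < l.length := List.length_pos_of_ne_nil (h2 l (by simp))
      have hl' : l.length - 1 + 1 = l.length := by omega
      subst h1
      refine ⟨⟨l.length - 1, L⟩, ?_, ?_⟩
      · simp only [Finset.mem_sigma, Finset.mem_range, mem_decs, hl']
        refine ⟨by simp; omega, by simp, fun x hx => h2 x (by simp [hx])⟩
      · simp [hl']
  · intros; rfl

end Splits

section Euler
variable {r : ℕ}

/-- Prefixing a letter, linearly. -/
noncomputable def pre (a : QLetter r) : EulerAlg r →ₗ[ℂ] EulerAlg r :=
  Finsupp.lmapDomain ℂ ℂ (a :: ·)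

theorem pre_single (a : QLetter r) (w : List (QLetter r)) (c : ℂ) :
    pre a (Finsupp.single w c) = Finsupp.single (a :: w) c := by
  simp [pre]

/-- Bilinear quasi-shuffle. -/
noncomputable def qM : EulerAlg r →ₗ[ℂ] EulerAlg r →ₗ[ℂ] EulerAlg r :=
  Finsupp.linearCombination ℂ (fun w => Finsupp.linearCombination ℂ (fun v => qmulW w v))

theorem qmul_eq (x y : EulerAlg r) : qmul x y = qM x y := by
  simp only [qmul, qM, Finsupp.linearCombination_apply, Finsupp.sum, LinearMap.sum_apply,
    LinearMap.smul_apply, Finset.smul_sum, mul_smul]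

theorem qM_single (w v : List (QLetter r)) :
    qM (Finsupp.single w 1) (Finsupp.single v 1) = qmulW w v := by
  simp [qM]

theorem one_qM (y : EulerAlg r) : qM (Finsupp.single [] 1) y = y := by
  have : qM (Finsupp.single [] 1) = (LinearMap.id : EulerAlg r →ₗ[ℂ] EulerAlg r) := by
    ext v : 2
    simp only [LinearMap.comp_apply, Finsupp.lsingle_apply, qM_single, LinearMap.id_apply]
    simp [qmulW]
  rw [this]; rfl

theorem qM_one (x : EulerAlg r) : qM x (Finsupp.single [] 1) = x := by
  have : qM.flip (Finsupp.single [] 1) = (LinearMap.id : EulerAlg r →ₗ[ℂ] EulerAlg r) := by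
    ext v : 2
    simp only [LinearMap.comp_apply, Finsupp.lsingle_apply, LinearMap.flip_apply, qM_single,
      LinearMap.id_apply]
    cases v <;> simp [qmulW]
  exact congrArg (fun φ => φ x) this

theorem qM_pre (a b : QLetter r) (x y : EulerAlg r) :
    qM (pre a x) (pre b y) =
      pre a (qM x (pre b y)) + pre b (qM (pre a x) y) + pre (ladd a b) (qM x y) := by
  induction x using Finsupp.induction_linear with
  | zero => simp
  | add x x' h h' => simp only [map_add, LinearMap.add_apply, h, h']; abel
  | single w c =>
    induction y using Finsupp.induction_linear with
    | zero => simp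
    | add x x' h h' => simp only [map_add, h, h']; abel
    | single v d =>
      rw [← mul_one c, ← mul_one d, ← smul_eq_mul, ← smul_eq_mul, ← Finsupp.smul_single,
        ← Finsupp.smul_single]
      simp only [map_smul, LinearMap.smul_apply, pre_single, qM_single]
      rw [qmulW]
      simp only [smul_add]
      rfl

/-- Sum of a block. -/
def bsum (b : List (QLetter r)) : QLetter r := ((b.map Prod.fst).sum, (b.map Prod.snd).sum)

theorem bsum_snoc (b : List (QLetter r)) (c : QLetter r) :
    bsum (b ++ [c]) = ladd (bsum b) c := by
  simp [bsum, ladd]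

theorem barW_eq (w : List (QLetter r)) :
    barW w = dsum w (fun L => Finsupp.single (L.map bsum) (1 : ℂ)) := by
  rw [← dsum_eq]; rfl

theorem barW_nil : barW ([] : List (QLetter r)) = Finsupp.single [] 1 := by
  rw [barW_eq, dsum_nil]; rfl

theorem barW_rec (w : List (QLetter r)) (hw : w ≠ []) :
    barW w = splP w (fun s t => pre (bsum s) (barW t)) := by
  rw [barW_eq, dsum_rec w hw]
  congr 1
  funext s t
  rw [barW_eq]
  simp only [dsum, map_sum, pre_single, List.map_cons]

theorem bar_qM_pre (p : List (QLetter r)) (c : QLetter r) (y : EulerAlg r) :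
    qM (barW p) (pre c y) = pre c (qM (barW p) y) +
      (splP p (fun s t => pre (bsum s) (qM (barW t) (pre c y))) +
       splP p (fun s t => pre (ladd (bsum s) c) (qM (barW t) y))) := by
  by_cases hp : p = []
  · subst hp
    simp [barW_nil, one_qM, splP]
  · have key : ∀ z, qM (barW p) z = splP p (fun s t => qM (pre (bsum s) (barW t)) z) := by
      intro z
      rw [barW_rec p hp]
      exact splP_map (qM.flip z).toAddMonoidHom p _
    rw [key, key]
    have := splP_map (pre c).toAddMonoidHom p (fun s t => qM (pre (bsum s) (barW t)) y)
    simp only [LinearMap.toAddMonoidHom_coe] at this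
    rw [this, ← splP_add, ← splP_add]
    congr 1
    funext s t
    rw [qM_pre]; abel

/-- The convolution sum. -/
noncomputable def FF (u : List (QLetter r)) : EulerAlg r :=
  spl u (fun p q => (-1 : ℂ) ^ p.length • qM (barW p) (Finsupp.single q.reverse 1))

theorem smul_pre_splits (φ : List (QLetter r) → QLetter r) (u : List (QLetter r)) :
    spl u (fun p q => (-1 : ℂ) ^ p.length • splP p (fun s t => pre (φ s)
        (qM (barW t) (Finsupp.single q.reverse 1)))) =
      splP u (fun s t => (-1 : ℂ) ^ s.length • pre (φ s) (FF t)) := by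
  have h1 : ∀ p q : List (QLetter r), (-1 : ℂ) ^ p.length • splP p (fun s t => pre (φ s)
        (qM (barW t) (Finsupp.single q.reverse 1))) =
      splP p (fun s t => (-1 : ℂ) ^ (s.length + t.length) • pre (φ s)
        (qM (barW t) (Finsupp.single q.reverse 1))) := by
    intro p q
    have := splP_map (DistribSMul.toAddMonoidHom (EulerAlg r) ((-1 : ℂ) ^ p.length)) p
      (fun s t => pre (φ s) (qM (barW t) (Finsupp.single q.reverse 1)))
    simp only [DistribSMul.toAddMonoidHom_apply] at this
    rw [this]
    apply splP_congr
    rintro s t - rfl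
    rw [List.length_append]
  simp only [h1]
  rw [splP_assoc u (fun s t q => (-1 : ℂ) ^ (s.length + t.length) • pre (φ s)
        (qM (barW t) (Finsupp.single q.reverse 1)))]
  congr 1
  funext s t
  have := spl_map ((-1 : ℂ) ^ s.length • pre (φ s)).toAddMonoidHom t
    (fun p q => (-1 : ℂ) ^ p.length • qM (barW p) (Finsupp.single q.reverse 1))
  simp only [LinearMap.toAddMonoidHom_coe, LinearMap.smul_apply, map_smul] at this
  rw [FF, this]
  congr 1
  funext p q
  rw [pow_add, mul_comm, mul_smul]

theorem FF_snoc (u : List (QLetter r)) (c : QLetter r) :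
    FF (u ++ [c]) = pre c (FF u) +
      (splP (u ++ [c]) (fun s t => (-1 : ℂ) ^ s.length • pre (bsum s) (FF t)) +
       splP u (fun s t => (-1 : ℂ) ^ s.length • pre (ladd (bsum s) c) (FF t))) := by
  rw [← smul_pre_splits bsum, ← smul_pre_splits (fun s => ladd (bsum s) c), FF, spl_snoc,
    spl_snoc]
  have h := spl_map (pre c).toAddMonoidHom u
    (fun p q => (-1 : ℂ) ^ p.length • qM (barW p) (Finsupp.single q.reverse 1))
  simp only [LinearMap.toAddMonoidHom_coe, map_smul] at h
  rw [FF, h]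
  simp only [List.reverse_append, List.reverse_cons, List.reverse_nil, List.nil_append,
    List.singleton_append, ← pre_single, qM_one]
  rw [← barW_rec _ (by simp)]
  have e : ∀ p q : List (QLetter r),
      (-1 : ℂ) ^ p.length • qM (barW p) (pre c (Finsupp.single q.reverse 1)) =
        (-1 : ℂ) ^ p.length • pre c (qM (barW p) (Finsupp.single q.reverse 1)) +
        ((-1 : ℂ) ^ p.length • splP p (fun s t => pre (bsum s)
            (qM (barW t) (pre c (Finsupp.single q.reverse 1)))) +
         (-1 : ℂ) ^ p.length • splP p (fun s t => pre (ladd (bsum s) c)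
            (qM (barW t) (Finsupp.single q.reverse 1)))) := by
    intro p q
    rw [bar_qM_pre, smul_add, smul_add]
  simp only [e, spl_add]
  abel

theorem FF_nil : FF ([] : List (QLetter r)) = Finsupp.single [] 1 := by
  simp [FF, spl, barW_nil, one_qM]

theorem FF_zero (n : ℕ) : ∀ u : List (QLetter r), u.length = n → u ≠ [] → FF u = 0 := by
  induction n using Nat.strong_induction_on with
  | _ n ih =>
    intro u hn hu
    obtain ⟨v, c, rfl⟩ : ∃ v c, u = v ++ [c] :=
      ⟨u.dropLast, u.getLast hu, (List.dropLast_append_getLast hu).symm⟩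
    rw [FF_snoc, splP_last (v ++ [c]) hu]
    · by_cases hv : v = []
      · subst hv
        simp [splP, FF_nil, bsum]
      · rw [splP_last v hv, ih v.length (by simp at hn; omega) v rfl hv, FF_nil, bsum_snoc]
        · simp [pow_succ]
        · rintro s t hs ht rfl
          rw [ih t.length (by simp at hn; omega) t rfl ht]
          simp
    · intro s t hs ht hst
      have := congrArg List.length hst
      have := List.length_pos_of_ne_nil hs
      rw [ih t.length (by simp at *; omega) t rfl ht]
      simp

theorem GG (n : ℕ) : ∀ u : List (QLetter r), u.length = n →
    dsum u (fun L => (-1 : ℂ) ^ (u.length + L.length) • qprodE (L.map barW)) =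
      Finsupp.single u.reverse 1 := by
  induction n using Nat.strong_induction_on with
  | _ n ih =>
    intro u hn
    by_cases hu : u = []
    · subst hu
      simp [dsum_nil, qprodE]
    · rw [dsum_rec u hu]
      have h := FF_zero n u hn hu
      rw [FF, spl_eq] at h
      simp only [List.length_nil, pow_zero, one_smul, barW_nil, one_qM] at h
      rw [eq_neg_of_add_eq_zero_left h]
      have h2 := splP_map (negAddMonoidHom : EulerAlg r →+ EulerAlg r) u
        (fun p q => (-1 : ℂ) ^ p.length • qM (barW p) (Finsupp.single q.reverse 1))
      simp only [negAddMonoidHom_apply] at h2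
      rw [h2]
      apply splP_congr
      rintro s t hs rfl
      have := List.length_pos_of_ne_nil hs
      rw [← ih t.length (by simp at hn; omega) t rfl]
      simp only [dsum, map_sum, Finset.smul_sum, ← Finset.sum_neg_distrib, map_smul]
      refine Finset.sum_congr rfl fun L _ => ?_
      rw [List.map_cons, qprodE, qmul_eq, smul_smul, ← neg_smul]
      congr 1
      simp only [List.length_append, List.length_cons, pow_add]
      ring

end Euler

/-- Inversion formula: `w` as the alternating sum over decompositions of the reversed
word of `*`-products of the `w̄ᵢ`. -/
theorem w_eq_bar_products (r : ℕ) (hr : 0 < r) (w : List (QLetter r))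
    (hpos : ∀ a ∈ w, 0 < a.1) :
    Finsupp.single w (1 : ℂ) =
      ∑ J : Composition w.length,
        (-1 : ℂ) ^ (w.length - J.length) •
          qprodE ((w.reverse.splitWrtComposition J).map barW) := by
  have key : ∀ (n : ℕ) (u : List (QLetter r)), u.length = n →
      ∑ J : Composition n, (-1 : ℂ) ^ (n - J.length) •
          qprodE ((u.splitWrtComposition J).map barW) = Finsupp.single u.reverse 1 := by
    rintro n u rfl
    rw [← GG _ u rfl, ← dsum_eq]
    refine Finset.sum_congr rfl fun J _ => ?_
    rw [List.length_splitWrtComposition]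
    congr 1
    have hJ := J.length_le
    obtain ⟨k, hk⟩ := Nat.exists_eq_add_of_le hJ
    have e : u.length + J.length = (u.length - J.length) + 2 * J.length := by omega
    rw [e, pow_add, pow_mul]
    simp
  have := key w.length w.reverse (by simp)
  rw [List.reverse_reverse] at this
  exact this.symm
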